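/- Let N ≥ 2, let ρ be a positive semidefinite N-qubit operator, let p : Fin N → ℝ with p_i ≥ 0 and Σ_i p_i = 1, and for each i ∈ Fin N let α_i, β_i be real numbers with α_i ≥ max(−1, β_i/2 − 1) and β_i ≥ max(−1, α_i/2 − 1). Then σ = Σ_{i ∈ Fin N} p_i · (Tr(ρ)·𝟙 + α_i·ρ + β_i·ρ̃_i) can be written as σ = Σ_{i ∈ Fin N} p_i · τ_i, where each τ_i is biseparable across the 1:(N−1) bipartition at qubit i; in particular σ has entanglement depth at most N − 1. -/

import Mathlib

open scoped ComplexOrder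

noncomputable section

/-- Separability of an `N`-qubit matrix across the bipartition `X : Xᶜ`. -/
def SepAcross {N : ℕ} (X : Finset (Fin N))
    (σ : Matrix (Fin N → Fin 2) (Fin N → Fin 2) ℂ) : Prop :=
  ∃ (K : ℕ)
    (A : Fin K → Matrix ({i // i ∈ X} → Fin 2) ({i // i ∈ X} → Fin 2) ℂ)
    (B : Fin K → Matrix ({i // i ∈ Xᶜ} → Fin 2) ({i // i ∈ Xᶜ} → Fin 2) ℂ),
    (∀ k, (A k).PosSemidef) ∧ (∀ k, (B k).PosSemidef) ∧
    ∀ x y, σ x y =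
      ∑ k, A k (fun i => x i.1) (fun i => y i.1) * B k (fun i => x i.1) (fun i => y i.1)

/-- Partial transpose with respect to the qubits in `X`. -/
def pt {N : ℕ} (X : Finset (Fin N))
    (σ : Matrix (Fin N → Fin 2) (Fin N → Fin 2) ℂ) :
    Matrix (Fin N → Fin 2) (Fin N → Fin 2) ℂ :=
  fun x y => σ (fun i => if i ∈ X then y i else x i) (fun i => if i ∈ X then x i else y i)

/-- The Dicke state `|S_k^N⟩`. -/
def dicke (N k : ℕ) : (Fin N → Fin 2) → ℂ :=
  fun x => if (Finset.univ.filter (fun i => x i = 1)).card = k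
    then ((Real.sqrt (N.choose k))⁻¹ : ℝ) else 0

/-- The projector onto the symmetric subspace of `N` qubits. -/
def symProj (N : ℕ) : Matrix (Fin N → Fin 2) (Fin N → Fin 2) ℂ :=
  fun x y => ∑ k ∈ Finset.range (N + 1), dicke N k x * star (dicke N k y)

/-- Full separability of an `N`-qubit matrix. -/
def FullySep {N : ℕ} (σ : Matrix (Fin N → Fin 2) (Fin N → Fin 2) ℂ) : Prop :=
  ∃ (K : ℕ) (A : Fin K → Fin N → Matrix (Fin 2) (Fin 2) ℂ),
    (∀ k i, (A k i).PosSemidef) ∧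
    ∀ x y, σ x y = ∑ k, ∏ i, A k i (x i) (y i)

/-- The second Pauli matrix. -/
def pauliY : Matrix (Fin 2) (Fin 2) ℂ := !![0, -Complex.I; Complex.I, 0]

/-- The `N`-qubit operator acting as `σy` on each qubit in `X` and trivially elsewhere. -/
def pauliYat {N : ℕ} (X : Finset (Fin N)) :
    Matrix (Fin N → Fin 2) (Fin N → Fin 2) ℂ :=
  fun x y => ∏ i, if i ∈ X then pauliY (x i) (y i) else (if x i = y i then 1 else 0)

/-- `(σy@X) · ρ^{T_X} · (σy@X)`. -/
def tildeAt {N : ℕ} (X : Finset (Fin N))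
    (ρ : Matrix (Fin N → Fin 2) (Fin N → Fin 2) ℂ) :
    Matrix (Fin N → Fin 2) (Fin N → Fin 2) ℂ :=
  pauliYat X * pt X ρ * pauliYat X

/-- The Hankel matrix `M_l(q)` with entries `q_{i+j+l} / (N choose (i+j+l))`. -/
def hankel (N l : ℕ) (q : ℕ → ℝ) :
    Matrix (Fin ((N - l) / 2 + 1)) (Fin ((N - l) / 2 + 1)) ℝ :=
  fun i j => q ((i : ℕ) + j + l) / (N.choose ((i : ℕ) + j + l))

/-- The diagonal symmetric state `Σ_k p_k |S_k^N⟩⟨S_k^N|`. -/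
def rhoDS (N : ℕ) (p : ℕ → ℝ) : Matrix (Fin N → Fin 2) (Fin N → Fin 2) ℂ :=
  fun x y => ∑ k ∈ Finset.range (N + 1), (p k : ℂ) * dicke N k x * star (dicke N k y)

/-!
On one qubit `σy Aᵀ σy = Tr(A) 𝟙 - A`, so `ρ̃ᵢ` is the image `𝟙 ⊗ Trᵢ ρ - ρ` of `ρ` under the
reduction map at qubit `i`. Write `x = ρ`, `y = ρ̃ᵢ` and `e = Tr(ρ) 𝟙`. For admissible `(α, β)` the
operator `e + α x + β y` is a conic combination of `e - x`, `e - y`, `e - (x + y)`, `2x + y` and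
`x + 2y`, so it suffices that these five are separable. As `x + y = 𝟙 ⊗ Trᵢ ρ`, the third is a
product. The operator `2x + y` is the sum of a pinching of `ρ` and an average over `c⁴ = 1` of
operators obtained by measuring qubit `i` in the state `(1, c)` and preparing that state again. The
same average, applied to a vector with the Schmidt coefficients interchanged, accounts for the
coherences of `e - x` when `ρ` is pure. Finally, the reduction map preserves separability, fixes `e`
and exchanges `x` and `y`.
-/

open Matrix
open scoped Kronecker

section Convexity

variable {E : Type*} [AddCommGroup E] [Module ℝ E] (C : PointedCone ℝ E) {e x y : E} {α β : ℝ}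

lemma add_smul_add_smul_mem_of_le (hx : e - x ∈ C) (hxy : e - (x + y) ∈ C)
    (hx2 : x + y + x ∈ C) (hy2 : x + y + y ∈ C) (hα : -1 ≤ α) (hαβ : α ≤ β)
    (hβ : β / 2 - 1 ≤ α) : e + α • x + β • y ∈ C := by
  have hsum : x + y ∈ C := by
    have hthird := C.smul_mem (show (0 : ℝ) ≤ 3⁻¹ by norm_num) (add_mem hx2 hy2)
    convert hthird using 1
    module
  obtain hle | hge := le_total β (α + 1)
  · have hdecomp : e + α • x + β • y =
        (1 + α - β) • (e - (x + y)) + (β - α) • (e - x) + (α + 1) • (x + y) := by module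
    rw [hdecomp]
    exact add_mem (add_mem (C.smul_mem (by linarith) hxy) (C.smul_mem (by linarith) hx))
      (C.smul_mem (by linarith) hsum)
  · have hdecomp : e + α • x + β • y =
        (e - x) + (2 * α + 2 - β) • (x + y) + (β - α - 1) • (x + y + y) := by module
    rw [hdecomp]
    exact add_mem (add_mem hx (C.smul_mem (by linarith) hsum)) (C.smul_mem (by linarith) hy2)

lemma add_smul_add_smul_mem_of_max_le (hx : e - x ∈ C) (hy : e - y ∈ C)
    (hxy : e - (x + y) ∈ C) (hx2 : x + y + x ∈ C) (hy2 : x + y + y ∈ C)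
    (hα : max (-1) (β / 2 - 1) ≤ α) (hβ : max (-1) (α / 2 - 1) ≤ β) :
    e + α • x + β • y ∈ C := by
  obtain ⟨hα₁, hα₂⟩ := max_le_iff.mp hα
  obtain ⟨hβ₁, hβ₂⟩ := max_le_iff.mp hβ
  obtain hle | hle := le_total α β
  · exact add_smul_add_smul_mem_of_le C hx hxy hx2 hy2 hα₁ hle hα₂
  · rw [add_right_comm]
    rw [add_comm x y] at hxy hx2 hy2
    exact add_smul_add_smul_mem_of_le C hy hxy hy2 hx2 hβ₁ hle hβ₂

end Convexity

section RankOne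

variable {n : Type*} [Fintype n]

lemma exists_sq_eq_dotProduct_and_isStarProjection (w : n → ℂ) :
    ∃ s : ℝ, star w ⬝ᵥ w = (s : ℂ) ^ 2 ∧ (s : ℂ) • (s : ℂ)⁻¹ • w = w ∧
      IsStarProjection (vecMulVec ((s : ℂ)⁻¹ • w) (star ((s : ℂ)⁻¹ • w))) := by
  have hs : star w ⬝ᵥ w = (‖WithLp.toLp 2 w‖ : ℂ) ^ 2 := by
    rw [dotProduct_comm, ← EuclideanSpace.inner_toLp_toLp, inner_self_eq_norm_sq_to_K]
    rfl
  refine ⟨‖WithLp.toLp 2 w‖, hs, ?_, ?_, ?_⟩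
  all_goals
    obtain rfl | hw := eq_or_ne w 0
    · simp [IsIdempotentElem, IsSelfAdjoint]
    have hne : (‖WithLp.toLp 2 w‖ : ℂ) ≠ 0 := by simpa using hw
  · exact smul_inv_smul₀ hne w
  · rw [IsIdempotentElem, vecMulVec_mul_vecMulVec, star_smul, smul_dotProduct, dotProduct_smul, hs]
    simp [sq, hne]
  · rw [IsSelfAdjoint, star_eq_conjTranspose, conjTranspose_vecMulVec, star_star]

variable [DecidableEq n]

open scoped MatrixOrder in
lemma posSemidef_one_sub_of_isStarProjection {P : Matrix n n ℂ} (hP : IsStarProjection P) :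
    (1 - P).PosSemidef :=
  nonneg_iff_posSemidef.mp hP.one_sub_nonneg

lemma posSemidef_trace_smul_one_sub {A : Matrix n n ℂ} (hA : A.PosSemidef) :
    (A.trace • 1 - A).PosSemidef := by
  obtain ⟨K, v, rfl⟩ := posSemidef_iff_eq_sum_vecMulVec.mp hA
  rw [trace_sum, Finset.sum_smul, ← Finset.sum_sub_distrib]
  refine posSemidef_sum _ fun k _ => ?_
  obtain ⟨s, hs, hv, hP⟩ := exists_sq_eq_dotProduct_and_isStarProjection (v k)
  have hsplit : (vecMulVec (v k) (star (v k))).trace • 1 - vecMulVec (v k) (star (v k)) =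
      (s ^ 2 : ℂ) • (1 - vecMulVec ((s : ℂ)⁻¹ • v k) (star ((s : ℂ)⁻¹ • v k))) := by
    rw [trace_vecMulVec, dotProduct_comm, hs, smul_sub]
    nth_rw 1 2 [← hv]
    simp [smul_vecMulVec, vecMulVec_smul, smul_smul, sq, mul_mul_mul_comm]
  rw [hsplit]
  exact (posSemidef_one_sub_of_isStarProjection hP).smul (by exact_mod_cast sq_nonneg s)

end RankOne

section Bipartite

variable {m n : Type*}

/-- The cone of (unnormalized) separable operators on `ℂ^m ⊗ ℂ^n`, generated by the Kronecker
products of positive semidefinite matrices. -/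
def separableCone (m n : Type*) : PointedCone ℝ (Matrix (m × n) (m × n) ℂ) :=
  PointedCone.hull ℝ (Set.image2 (· ⊗ₖ ·) {A : Matrix m m ℂ | A.PosSemidef}
    {B : Matrix n n ℂ | B.PosSemidef})

lemma kronecker_mem_separableCone {A : Matrix m m ℂ} {B : Matrix n n ℂ} (hA : A.PosSemidef)
    (hB : B.PosSemidef) : A ⊗ₖ B ∈ separableCone m n :=
  PointedCone.subset_hull ⟨A, hA, B, hB, rfl⟩

lemma exists_eq_sum_kronecker_of_mem_separableCone {M : Matrix (m × n) (m × n) ℂ}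
    (hM : M ∈ separableCone m n) :
    ∃ (K : ℕ) (A : Fin K → Matrix m m ℂ) (B : Fin K → Matrix n n ℂ),
      (∀ k, (A k).PosSemidef) ∧ (∀ k, (B k).PosSemidef) ∧ M = ∑ k, A k ⊗ₖ B k := by
  obtain ⟨K, c, P, rfl⟩ := Submodule.mem_span_set'.mp hM
  choose A hA B hB hP using fun k => (P k).2
  refine ⟨K, fun k => c k • A k, B, fun k => (hA k).smul (c k).2, hB, ?_⟩
  simp only [← hP, smul_kronecker]

lemma map_mem_separableCone (L : Matrix (m × n) (m × n) ℂ →ₗ[ℝ] Matrix (m × n) (m × n) ℂ)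
    (hL : ∀ A B, A.PosSemidef → B.PosSemidef → L (A ⊗ₖ B) ∈ separableCone m n)
    {M : Matrix (m × n) (m × n) ℂ} (hM : M ∈ separableCone m n) : L M ∈ separableCone m n := by
  suffices h : separableCone m n ≤ (separableCone m n).comap L from h hM
  refine Submodule.span_le.mpr ?_
  rintro _ ⟨A, hA, B, hB, rfl⟩
  exact hL A B hA hB

lemma local_conj_mem_separableCone [Fintype m] [Fintype n] [DecidableEq n] (U : Matrix m m ℂ)
    {M : Matrix (m × n) (m × n) ℂ} (hM : M ∈ separableCone m n) :
    (U ⊗ₖ (1 : Matrix n n ℂ)) * M * (U ⊗ₖ (1 : Matrix n n ℂ))ᴴ ∈ separableCone m n := by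
  refine map_mem_separableCone
    (LinearMap.mulRight ℝ (U ⊗ₖ (1 : Matrix n n ℂ))ᴴ ∘ₗ
      LinearMap.mulLeft ℝ (U ⊗ₖ (1 : Matrix n n ℂ))) (fun A B hA hB => ?_) hM
  simp only [LinearMap.comp_apply, LinearMap.mulLeft_apply, LinearMap.mulRight_apply,
    conjTranspose_kronecker, ← mul_kronecker_mul, conjTranspose_one, one_mul, mul_one]
  exact kronecker_mem_separableCone (hA.mul_mul_conjTranspose_same U) hB

/-- The partial transpose of an operator on `ℂ^m ⊗ ℂ^n` in the first factor. -/
def transposeLeft (M : Matrix (m × n) (m × n) ℂ) : Matrix (m × n) (m × n) ℂ :=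
  of fun p q => M (q.1, p.2) (p.1, q.2)

/-- The operator `(⟨φ| ⊗ 𝟙) M (|φ⟩ ⊗ 𝟙)` on the second factor. -/
def compressLeft [Fintype m] (φ : m → ℂ) (M : Matrix (m × n) (m × n) ℂ) : Matrix n n ℂ :=
  of fun k l => ∑ a, ∑ b, star (φ a) * M (a, k) (b, l) * φ b

lemma posSemidef_compressLeft [Fintype m] [Finite n] (φ : m → ℂ)
    {M : Matrix (m × n) (m × n) ℂ} (hM : M.PosSemidef) : (compressLeft φ M).PosSemidef := by
  classical
  have := Fintype.ofFinite n
  have hcompress := hM.conjTranspose_mul_mul_same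
    (of fun (p : m × n) k => φ p.1 * (1 : Matrix n n ℂ) p.2 k)
  convert hcompress using 1
  ext k l
  rw [compressLeft, of_apply, Finset.sum_comm]
  simp [mul_apply, one_apply, Fintype.sum_prod_type, Finset.sum_mul, apply_ite]

/-- The `a`-th diagonal block of an operator on `ℂ^m ⊗ ℂ^n`. -/
def diagBlock (M : Matrix (m × n) (m × n) ℂ) (a : m) : Matrix n n ℂ :=
  M.submatrix (Prod.mk a) (Prod.mk a)

variable [Fintype m]

/-- The partial trace over the first factor of `ℂ^m ⊗ ℂ^n`. -/
def traceLeft (M : Matrix (m × n) (m × n) ℂ) : Matrix n n ℂ := ∑ a, diagBlock M a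

lemma traceLeft_add (M M' : Matrix (m × n) (m × n) ℂ) :
    traceLeft (M + M') = traceLeft M + traceLeft M' :=
  Finset.sum_add_distrib

lemma traceLeft_smul (r : ℝ) (M : Matrix (m × n) (m × n) ℂ) :
    traceLeft (r • M) = r • traceLeft M := by
  rw [traceLeft, traceLeft, Finset.smul_sum]
  rfl

lemma traceLeft_kronecker (A : Matrix m m ℂ) (B : Matrix n n ℂ) :
    traceLeft (A ⊗ₖ B) = A.trace • B := by
  rw [trace, Finset.sum_smul]
  rfl

lemma posSemidef_traceLeft {M : Matrix (m × n) (m × n) ℂ} (hM : M.PosSemidef) :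
    (traceLeft M).PosSemidef :=
  posSemidef_sum _ fun _ _ => hM.submatrix _

lemma trace_traceLeft [Fintype n] (M : Matrix (m × n) (m × n) ℂ) :
    (traceLeft M).trace = M.trace := by
  simp [trace, traceLeft, diagBlock, Matrix.sum_apply, Fintype.sum_prod_type_right]

variable [DecidableEq m]

/-- The pinching of an operator on `ℂ^m ⊗ ℂ^n`: its off-diagonal blocks are set to zero. -/
def pinching (M : Matrix (m × n) (m × n) ℂ) : Matrix (m × n) (m × n) ℂ :=
  ∑ a, diagonal (Pi.single a 1) ⊗ₖ diagBlock M a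

lemma pinching_mem_separableCone {M : Matrix (m × n) (m × n) ℂ} (hM : M.PosSemidef) :
    pinching M ∈ separableCone m n :=
  Submodule.sum_mem _ fun _ _ => kronecker_mem_separableCone
    (PosSemidef.diagonal (Pi.single_nonneg.mpr zero_le_one)) (hM.submatrix _)

variable (m n) in
/-- The reduction map `M ↦ 𝟙 ⊗ Tr₁ M - M` of the reduction criterion, i.e. the positive map
`A ↦ Tr(A) 𝟙 - A` applied to the first factor. -/
def reductionMap :
    Matrix (m × n) (m × n) ℂ →ₗ[ℝ] Matrix (m × n) (m × n) ℂ where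
  toFun M := (1 : Matrix m m ℂ) ⊗ₖ traceLeft M - M
  map_add' M M' := by rw [traceLeft_add, kronecker_add, add_sub_add_comm]
  map_smul' r M := by rw [traceLeft_smul, kronecker_smul, smul_sub, RingHom.id_apply]

lemma reductionMap_apply (M : Matrix (m × n) (m × n) ℂ) :
    reductionMap m n M = (1 : Matrix m m ℂ) ⊗ₖ traceLeft M - M := rfl

lemma reductionMap_kronecker (A : Matrix m m ℂ) (B : Matrix n n ℂ) :
    reductionMap m n (A ⊗ₖ B) = (A.trace • 1 - A) ⊗ₖ B := by
  rw [reductionMap_apply, traceLeft_kronecker, kronecker_smul, ← smul_kronecker,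
    sub_eq_iff_eq_add, ← add_kronecker, sub_add_cancel]

lemma reductionMap_mem_separableCone {M : Matrix (m × n) (m × n) ℂ}
    (hM : M ∈ separableCone m n) : reductionMap m n M ∈ separableCone m n :=
  map_mem_separableCone _ (fun A B hA hB => by
    rw [reductionMap_kronecker]
    exact kronecker_mem_separableCone (posSemidef_trace_smul_one_sub hA) hB) hM

lemma add_reductionMap (M : Matrix (m × n) (m × n) ℂ) :
    M + reductionMap m n M = (1 : Matrix m m ℂ) ⊗ₖ traceLeft M := by
  rw [reductionMap_apply, add_sub_cancel]

variable [Fintype n] [DecidableEq n]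

lemma trace_smul_one_sub_one_kronecker_traceLeft_mem_separableCone
    {M : Matrix (m × n) (m × n) ℂ} (hM : M.PosSemidef) :
    M.trace • 1 - (1 : Matrix m m ℂ) ⊗ₖ traceLeft M ∈ separableCone m n := by
  rw [← one_kronecker_one, ← kronecker_smul, ← trace_traceLeft, sub_eq_add_neg, ← neg_one_smul ℂ,
    ← kronecker_smul, ← kronecker_add, neg_one_smul, ← sub_eq_add_neg]
  exact kronecker_mem_separableCone .one (posSemidef_trace_smul_one_sub (posSemidef_traceLeft hM))

lemma exists_unitary_mulVec_orthogonal_slices (w : m × n → ℂ) :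
    ∃ U ∈ unitaryGroup m ℂ, ∃ v : m × n → ℂ, (U ⊗ₖ (1 : Matrix n n ℂ)) *ᵥ v = w ∧
      Pairwise fun a b => star (fun k => v (a, k)) ⬝ᵥ (fun k => v (b, k)) = 0 := by
  obtain ⟨Ψ, rfl⟩ := vec_bijective.surjective w
  have hΨ : (Ψᴴ * Ψ).IsHermitian := isHermitian_conjTranspose_mul_self Ψ
  let V : Matrix m m ℂ := hΨ.eigenvectorUnitary
  have hV : V * Vᴴ = 1 := Unitary.coe_mul_star_self hΨ.eigenvectorUnitary
  have hdiag : (Ψ * V)ᴴ * (Ψ * V) = diagonal (RCLike.ofReal ∘ hΨ.eigenvalues) := by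
    rw [← hΨ.conjStarAlgAut_star_eigenvectorUnitary, Unitary.conjStarAlgAut_star_apply,
      conjTranspose_mul]
    simp only [Matrix.mul_assoc]
    rfl
  refine ⟨V.map star, map_star_mem_unitaryGroup_iff.mpr hΨ.eigenvectorUnitary.2, vec (Ψ * V),
    ?_, fun a b hab => ?_⟩
  · rw [kronecker_mulVec_vec, ← transpose_map, ← conjTranspose, Matrix.one_mul, Matrix.mul_assoc,
      hV, Matrix.mul_one]
  · have := congrFun₂ hdiag a b
    rwa [diagonal_apply_ne _ hab] at this

end Bipartite

section Qubit

variable {n : Type*}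

lemma reductionMap_one_kronecker (B : Matrix n n ℂ) :
    reductionMap (Fin 2) n (1 ⊗ₖ B) = 1 ⊗ₖ B := by
  rw [reductionMap_kronecker, trace_one, Fintype.card_fin, Nat.cast_ofNat, two_smul,
    add_sub_cancel_right]

lemma one_kronecker_traceLeft_add_sub_pinching_mem_separableCone [Finite n]
    {M : Matrix (Fin 2 × n) (Fin 2 × n) ℂ} (hM : M.PosSemidef) :
    1 ⊗ₖ traceLeft M + (M - pinching M) ∈ separableCone (Fin 2) n := by
  let φ (c : ℂ) : Fin 2 → ℂ := ![1, c]
  let F (c : ℂ) := vecMulVec (φ c) (star (φ c)) ⊗ₖ compressLeft (φ c) M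
  have hF_apply (c : ℂ) (a b : Fin 2) (k l : n) : F c (a, k) (b, l) =
      φ c a * star (φ c b) * ∑ a', ∑ b', star (φ c a') * M (a', k) (b', l) * φ c b' := rfl
  have hF (c : ℂ) : F c ∈ separableCone (Fin 2) n := kronecker_mem_separableCone
    (posSemidef_vecMulVec_self_star _) (posSemidef_compressLeft _ hM)
  -- Averaging over the fourth roots of unity `c` cancels every phase `c ^ k` with `4 ∤ k`.
  have haverage : 1 ⊗ₖ traceLeft M + (M - pinching M) =
      (4⁻¹ : ℝ) • (F 1 + F (-1) + F Complex.I + F (-Complex.I)) := by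
    ext ⟨a, k⟩ ⟨b, l⟩
    fin_cases a <;> fin_cases b <;>
      simp [hF_apply, φ, traceLeft, diagBlock, pinching,
        Fin.sum_univ_two] <;>
      ring_nf <;> simp only [Complex.I_sq] <;> ring
  rw [haverage]
  exact PointedCone.smul_mem _ (by norm_num)
    (add_mem (add_mem (add_mem (hF _) (hF _)) (hF _)) (hF _))

lemma one_kronecker_traceLeft_add_mem_separableCone [Finite n]
    {M : Matrix (Fin 2 × n) (Fin 2 × n) ℂ} (hM : M.PosSemidef) :
    1 ⊗ₖ traceLeft M + M ∈ separableCone (Fin 2) n := by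
  rw [← sub_add_cancel M (pinching M), ← add_assoc, sub_add_cancel M]
  exact add_mem (one_kronecker_traceLeft_add_sub_pinching_mem_separableCone hM)
    (pinching_mem_separableCone hM)

/-- The vector `|0⟩ ⊗ x + |1⟩ ⊗ y` of `ℂ² ⊗ ℂ^n`. -/
def qubitStack (x y : n → ℂ) : Fin 2 × n → ℂ := fun p => ![x, y] p.1 p.2

/- The vector `z` is chosen so that `|z⟩⟨z|` has the same off-diagonal blocks as `-|w⟩⟨w|`; what
remains is block diagonal. -/
lemma smul_one_sub_vecMulVec_qubitStack [DecidableEq n] (s t : ℝ) (x y : n → ℂ) :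
    let w := qubitStack ((s : ℂ) • x) ((t : ℂ) • y)
    let w' := qubitStack ((t : ℂ) • y) ((s : ℂ) • x)
    let z := qubitStack ((t : ℂ) • x) (-(s : ℂ) • y)
    ((s : ℂ) ^ 2 + (t : ℂ) ^ 2) • 1 - vecMulVec w (star w) =
      (s ^ 2 + t ^ 2) • 1 ⊗ₖ (1 - (vecMulVec x (star x) + vecMulVec y (star y))) +
        pinching (vecMulVec w' (star w')) +
        (1 ⊗ₖ traceLeft (vecMulVec z (star z)) +
          (vecMulVec z (star z) - pinching (vecMulVec z (star z)))) := by
  ext ⟨a, k⟩ ⟨b, l⟩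
  fin_cases a <;> fin_cases b <;> by_cases hkl : k = l <;>
    simp [hkl, qubitStack, traceLeft, diagBlock, pinching, vecMulVec_apply, one_apply,
      Fin.sum_univ_two] <;>
    ring

variable [Fintype n] [DecidableEq n]

lemma trace_smul_one_sub_pure_mem_separableCone_of_orthogonal (w : Fin 2 × n → ℂ)
    (hw : star (fun k => w (0, k)) ⬝ᵥ (fun k => w (1, k)) = 0) :
    (vecMulVec w (star w)).trace • 1 - vecMulVec w (star w) ∈ separableCone (Fin 2) n := by
  obtain ⟨s, hs, hx, hP⟩ := exists_sq_eq_dotProduct_and_isStarProjection fun k => w (0, k)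
  obtain ⟨t, ht, hy, hQ⟩ := exists_sq_eq_dotProduct_and_isStarProjection fun k => w (1, k)
  set x := (s : ℂ)⁻¹ • fun k => w (0, k) with hx_def
  set y := (t : ℂ)⁻¹ • fun k => w (1, k) with hy_def
  have hPQ : vecMulVec x (star x) * vecMulVec y (star y) = 0 := by
    rw [vecMulVec_mul_vecMulVec, hx_def, hy_def, star_smul, smul_dotProduct, dotProduct_smul, hw,
      smul_zero, smul_zero, zero_smul, vecMulVec_zero]
  have htrace : (vecMulVec w (star w)).trace = (s : ℂ) ^ 2 + (t : ℂ) ^ 2 := by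
    rw [← hs, ← ht, trace_vecMulVec, dotProduct_comm]
    simp [dotProduct, Fintype.sum_prod_type]
  have hstack : w = qubitStack ((s : ℂ) • x) ((t : ℂ) • y) := by
    ext ⟨a, k⟩
    fin_cases a
    exacts [(congrFun hx k).symm, (congrFun hy k).symm]
  rw [htrace, hstack, smul_one_sub_vecMulVec_qubitStack]
  refine add_mem (add_mem (PointedCone.smul_mem _ (by positivity) ?_) ?_) ?_
  · exact kronecker_mem_separableCone .one (posSemidef_one_sub_of_isStarProjection (hP.add hQ hPQ))
  · exact pinching_mem_separableCone (posSemidef_vecMulVec_self_star _)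
  · exact one_kronecker_traceLeft_add_sub_pinching_mem_separableCone
      (posSemidef_vecMulVec_self_star _)

lemma trace_smul_one_sub_pure_mem_separableCone (w : Fin 2 × n → ℂ) :
    (vecMulVec w (star w)).trace • 1 - vecMulVec w (star w) ∈ separableCone (Fin 2) n := by
  obtain ⟨U, hU, v, rfl, hv⟩ := exists_unitary_mulVec_orthogonal_slices w
  have hmem := local_conj_mem_separableCone U
    (trace_smul_one_sub_pure_mem_separableCone_of_orthogonal v (hv zero_ne_one))
  have hW := kronecker_mem_unitary hU (one_mem (unitary (Matrix n n ℂ)))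
  set W := U ⊗ₖ (1 : Matrix n n ℂ)
  rw [Unitary.mem_iff, star_eq_conjTranspose] at hW
  have hconj : vecMulVec (W *ᵥ v) (star (W *ᵥ v)) = W * vecMulVec v (star v) * Wᴴ := by
    rw [mul_vecMulVec, vecMulVec_mul, star_mulVec]
  have htrace : (W * vecMulVec v (star v) * Wᴴ).trace = (vecMulVec v (star v)).trace := by
    rw [trace_mul_cycle, hW.1, Matrix.one_mul]
  rw [hconj, htrace]
  rwa [mul_sub, sub_mul, mul_smul_comm, smul_mul_assoc, Matrix.mul_one, hW.2] at hmem

lemma trace_smul_one_sub_mem_separableCone {M : Matrix (Fin 2 × n) (Fin 2 × n) ℂ}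
    (hM : M.PosSemidef) : M.trace • 1 - M ∈ separableCone (Fin 2) n := by
  obtain ⟨K, v, rfl⟩ := posSemidef_iff_eq_sum_vecMulVec.mp hM
  rw [trace_sum, Finset.sum_smul, ← Finset.sum_sub_distrib]
  exact Submodule.sum_mem _ fun k _ => trace_smul_one_sub_pure_mem_separableCone (v k)

lemma trace_smul_one_add_smul_add_smul_reductionMap_mem_separableCone
    {M : Matrix (Fin 2 × n) (Fin 2 × n) ℂ} (hM : M.PosSemidef) {α β : ℝ}
    (hα : max (-1) (β / 2 - 1) ≤ α) (hβ : max (-1) (α / 2 - 1) ≤ β) :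
    M.trace • 1 + α • M + β • reductionMap (Fin 2) n M ∈ separableCone (Fin 2) n := by
  have hone : reductionMap (Fin 2) n (M.trace • 1) = M.trace • 1 := by
    rw [← one_kronecker_one, ← kronecker_smul, reductionMap_one_kronecker]
  have hx := trace_smul_one_sub_mem_separableCone hM
  have hy := reductionMap_mem_separableCone hx
  rw [map_sub, hone] at hy
  have hx2 := one_kronecker_traceLeft_add_mem_separableCone hM
  have hy2 := reductionMap_mem_separableCone hx2
  rw [map_add, reductionMap_one_kronecker] at hy2
  apply add_smul_add_smul_mem_of_max_le _ hx hy _ _ _ hα hβ <;> rw [add_reductionMap]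
  exacts [trace_smul_one_sub_one_kronecker_traceLeft_mem_separableCone hM, hx2, hy2]

lemma pauliY_kronecker_one_conj_transposeLeft (M : Matrix (Fin 2 × n) (Fin 2 × n) ℂ) :
    (pauliY ⊗ₖ (1 : Matrix n n ℂ)) * transposeLeft M * (pauliY ⊗ₖ (1 : Matrix n n ℂ)) =
      reductionMap (Fin 2) n M := by
  ext ⟨a, k⟩ ⟨b, l⟩
  fin_cases a <;> fin_cases b <;>
    simp [transposeLeft, reductionMap_apply, traceLeft, diagBlock, pauliY, mul_apply, one_apply,
      Fintype.sum_prod_type, mul_right_comm]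

end Qubit

section SplitQubit

variable {N : ℕ} (i : Fin N)

/-- The identification of the operators on `N` qubits with those on `ℂ² ⊗ (ℂ²)^⊗(N-1)`, the first
factor being qubit `i`. -/
def splitQubit : Matrix (Fin N → Fin 2) (Fin N → Fin 2) ℂ ≃ₐ[ℂ]
    Matrix (Fin 2 × ({j // j ≠ i} → Fin 2)) (Fin 2 × ({j // j ≠ i} → Fin 2)) ℂ :=
  reindexAlgEquiv ℂ ℂ (Equiv.funSplitAt i (Fin 2))

lemma splitQubit_apply (σ : Matrix (Fin N → Fin 2) (Fin N → Fin 2) ℂ) :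
    splitQubit i σ =
      σ.submatrix (Equiv.funSplitAt i (Fin 2)).symm (Equiv.funSplitAt i (Fin 2)).symm := rfl

lemma trace_splitQubit (σ : Matrix (Fin N → Fin 2) (Fin N → Fin 2) ℂ) :
    (splitQubit i σ).trace = σ.trace :=
  (Equiv.funSplitAt i (Fin 2)).symm.sum_comp fun x => σ x x

lemma splitQubit_pauliYat : splitQubit i (pauliYat {i}) = pauliY ⊗ₖ 1 := by
  ext ⟨a, f⟩ ⟨b, g⟩
  have hne (j : {j // j ≠ i}) : (j : Fin N) ≠ i := j.2
  simp [splitQubit_apply, pauliYat, Fintype.prod_eq_mul_prod_subtype_ne _ i, one_apply,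
    funext_iff, Finset.prod_ite_zero, hne]

lemma splitQubit_pt (ρ : Matrix (Fin N → Fin 2) (Fin N → Fin 2) ℂ) :
    splitQubit i (pt {i} ρ) = transposeLeft (splitQubit i ρ) := by
  ext ⟨a, f⟩ ⟨b, g⟩
  simp only [splitQubit_apply, pt, transposeLeft, submatrix_apply, of_apply]
  congr 1 <;> ext j <;> by_cases hj : j = i <;> simp [hj]

lemma splitQubit_tildeAt (ρ : Matrix (Fin N → Fin 2) (Fin N → Fin 2) ℂ) :
    splitQubit i (tildeAt {i} ρ) = reductionMap _ _ (splitQubit i ρ) := by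
  rw [tildeAt, map_mul, map_mul, splitQubit_pauliYat, splitQubit_pt,
    pauliY_kronecker_one_conj_transposeLeft]

variable {i}

lemma sepAcross_singleton_of_splitQubit_mem_separableCone
    {σ : Matrix (Fin N → Fin 2) (Fin N → Fin 2) ℂ}
    (hσ : splitQubit i σ ∈ separableCone (Fin 2) ({j // j ≠ i} → Fin 2)) : SepAcross {i} σ := by
  obtain ⟨K, A, B, hA, hB, hsum⟩ := exists_eq_sum_kronecker_of_mem_separableCone hσ
  refine ⟨K, fun k => (A k).submatrix (fun f => f ⟨i, by simp⟩) (fun f => f ⟨i, by simp⟩),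
    fun k => (B k).submatrix (fun f j => f ⟨j.1, by simpa using j.2⟩)
      (fun f j => f ⟨j.1, by simpa using j.2⟩),
    fun k => (hA k).submatrix _, fun k => (hB k).submatrix _, fun x y => ?_⟩
  rw [← (splitQubit i).symm_apply_apply σ, hsum]
  change (∑ k, A k ⊗ₖ B k) (Equiv.funSplitAt i (Fin 2) x) (Equiv.funSplitAt i (Fin 2) y) = _
  simp [Matrix.sum_apply]

end SplitQubit

theorem stmt17_general {N : ℕ} (i : Fin N)
    {ρ : Matrix (Fin N → Fin 2) (Fin N → Fin 2) ℂ} (hρ : ρ.PosSemidef) {α β : ℝ}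
    (hα : max (-1) (β / 2 - 1) ≤ α) (hβ : max (-1) (α / 2 - 1) ≤ β) :
    SepAcross {i} (ρ.trace • (1 : Matrix (Fin N → Fin 2) (Fin N → Fin 2) ℂ) + (α : ℂ) • ρ +
      (β : ℂ) • tildeAt {i} ρ) := by
  refine sepAcross_singleton_of_splitQubit_mem_separableCone ?_
  rw [map_add, map_add, map_smul, map_smul, map_smul, map_one, splitQubit_tildeAt,
    ← trace_splitQubit i, Complex.coe_smul, Complex.coe_smul]
  exact trace_smul_one_add_smul_add_smul_reductionMap_mem_separableCone (hρ.submatrix _) hα hβ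

/-- A convex mixture of Breuer-Hall-inspired maps produces a mixture of states each
biseparable across some `1:(N-1)` bipartition. -/
theorem stmt17 (N : ℕ) (hN : 2 ≤ N)
    (ρ : Matrix (Fin N → Fin 2) (Fin N → Fin 2) ℂ) (hρ : ρ.PosSemidef)
    (p : Fin N → ℝ) (hp : ∀ i, 0 ≤ p i) (hpsum : ∑ i, p i = 1)
    (α β : Fin N → ℝ)
    (hα : ∀ i, max (-1) (β i / 2 - 1) ≤ α i)
    (hβ : ∀ i, max (-1) (α i / 2 - 1) ≤ β i) :
    ∃ τ : Fin N → Matrix (Fin N → Fin 2) (Fin N → Fin 2) ℂ,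
      (∀ i, SepAcross {i} (τ i)) ∧
      ∑ i, (p i : ℂ) •
          (ρ.trace • (1 : Matrix (Fin N → Fin 2) (Fin N → Fin 2) ℂ) + (α i : ℂ) • ρ +
            (β i : ℂ) • tildeAt {i} ρ) =
        ∑ i, (p i : ℂ) • τ i := by
  exact ⟨_, fun i => stmt17_general i hρ (hα i) (hβ i), rfl⟩
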